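/- Every bounded subset B of the space O^m_{s_ω}(ℝ^N) (smooth f with q_{m,g}(f) < ∞ for all g ∈ S_ω(ℝ^N), topologized by the norms q_{m,g}) is contained and bounded in some Banach space O^m_{n₀,ω}(ℝ^N); i.e., there exists n₀ ∈ ℕ with sup_{f∈B} r_{m,n₀}(f) < ∞. -/

import Mathlib

open Real Set Filter

noncomputable section

abbrev Euc (N : ℕ) := EuclideanSpace ℝ (Fin N)

/-- single partial derivative in direction `i` -/
noncomputable def pd {N : ℕ} (i : Fin N) (f : Euc N → ℝ) : Euc N → ℝ :=
  fun x => fderiv ℝ f x (EuclideanSpace.single i 1)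

/-- iterated partial derivative `∂^α` for a multi-index `α` -/
noncomputable def pdm {N : ℕ} (α : Fin N → ℕ) (f : Euc N → ℝ) : Euc N → ℝ :=
  ((List.ofFn fun i : Fin N => (pd i)^[α i]).foldr (· ∘ ·) id) f

/-- length `|α|` of a multi-index -/
def msize {N : ℕ} (α : Fin N → ℕ) : ℕ := ∑ i, α i

/-- the Young conjugate `φ*_ω(s) = sup_{t ≥ 0} (s t - ω(e^t))` -/
noncomputable def phiStar (ω : ℝ → ℝ) (s : ℝ) : ℝ :=
  sSup {y : ℝ | ∃ t : ℝ, 0 ≤ t ∧ y = s * t - ω (Real.exp t)}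

/-- non-quasianalytic weight function in the sense of Braun-Meise-Taylor -/
structure IsWeightFun (ω : ℝ → ℝ) : Prop where
  nonneg : ∀ t, 0 ≤ t → 0 ≤ ω t
  cont : ContinuousOn ω (Ici 0)
  mono : MonotoneOn ω (Ici 0)
  alpha : ∃ K : ℝ, 1 ≤ K ∧ ∀ t, 0 ≤ t → ω (2 * t) ≤ K * (1 + ω t)
  beta : MeasureTheory.IntegrableOn (fun t => ω t / (1 + t ^ 2)) (Ici 1)
  gamma : ∃ a : ℝ, ∃ b : ℝ, 0 < b ∧ ∀ t, 0 ≤ t → a + b * Real.log (1 + t) ≤ ω t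
  delta : ConvexOn ℝ univ (fun t => ω (Real.exp t))

/-- membership in `𝒮_ω(ℝ^N)` -/
def MemS (ω : ℝ → ℝ) {N : ℕ} (f : Euc N → ℝ) : Prop :=
  ContDiff ℝ (⊤ : ℕ∞) f ∧ ∀ lam mu : ℝ, 0 < lam → 0 < mu → ∃ C : ℝ,
    ∀ (α : Fin N → ℕ) (x : Euc N),
      Real.exp (mu * ω ‖x‖) * |pdm α f x| ≤ C * Real.exp (lam * phiStar ω (msize α / lam))

/-- membership in `ℰ_ω(ℝ^N)` -/
def MemE (ω : ℝ → ℝ) {N : ℕ} (f : Euc N → ℝ) : Prop :=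
  ContDiff ℝ (⊤ : ℕ∞) f ∧ ∀ K : Set (Euc N), IsCompact K → ∀ m : ℕ, 0 < m → ∃ C : ℝ,
    ∀ (α : Fin N → ℕ), ∀ x ∈ K, |pdm α f x| ≤ C * Real.exp (m * phiStar ω (msize α / m))

/-- membership in `𝒟_ω(ℝ^N)` -/
def MemD (ω : ℝ → ℝ) {N : ℕ} (f : Euc N → ℝ) : Prop :=
  MemE ω f ∧ HasCompactSupport f

/-- membership in `𝒪_{M,ω}(ℝ^N)`: slowly increasing functions of Beurling type -/
def MemOM (ω : ℝ → ℝ) {N : ℕ} (f : Euc N → ℝ) : Prop :=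
  ContDiff ℝ (⊤ : ℕ∞) f ∧ ∀ m : ℕ, 0 < m → ∃ C : ℝ, 0 < C ∧ ∃ n : ℕ,
    ∀ (α : Fin N → ℕ) (x : Euc N),
      |pdm α f x| ≤ C * Real.exp (n * ω ‖x‖ + m * phiStar ω (msize α / m))

/-- the weighted sup norm `r_{m,n}` -/
noncomputable def rNorm (ω : ℝ → ℝ) {N : ℕ} (m : ℕ) (n : ℤ) (f : Euc N → ℝ) : ℝ :=
  ⨆ p : (Fin N → ℕ) × Euc N,
    |pdm p.1 f p.2| * Real.exp (-(n : ℝ) * ω ‖p.2‖ - m * phiStar ω (msize p.1 / m))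

/-- finiteness of the norm `r_{m,n}` -/
def rBdd (ω : ℝ → ℝ) {N : ℕ} (m : ℕ) (n : ℤ) (f : Euc N → ℝ) : Prop :=
  BddAbove (Set.range fun p : (Fin N → ℕ) × Euc N =>
    |pdm p.1 f p.2| * Real.exp (-(n : ℝ) * ω ‖p.2‖ - m * phiStar ω (msize p.1 / m)))

/-- membership in `𝒪^m_{n,ω}(ℝ^N)` -/
def MemOmn (ω : ℝ → ℝ) {N : ℕ} (m : ℕ) (n : ℤ) (f : Euc N → ℝ) : Prop :=
  ContDiff ℝ (⊤ : ℕ∞) f ∧ rBdd ω m n f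

/-- the norm `q_{λ,μ}` of `𝒮_ω(ℝ^N)` -/
noncomputable def qNorm (ω : ℝ → ℝ) {N : ℕ} (lam mu : ℝ) (f : Euc N → ℝ) : ℝ :=
  ⨆ p : (Fin N → ℕ) × Euc N,
    Real.exp (-(lam * phiStar ω (msize p.1 / lam)) + mu * ω ‖p.2‖) * |pdm p.1 f p.2|

/-- finiteness of the norm `q_{m,g}` -/
def qgBdd (ω : ℝ → ℝ) {N : ℕ} (m : ℕ) (g f : Euc N → ℝ) : Prop :=
  BddAbove (Set.range fun p : (Fin N → ℕ) × Euc N =>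
    |g p.2| * |pdm p.1 f p.2| * Real.exp (-(m : ℝ) * phiStar ω (msize p.1 / m)))

end

/-- Induction principle for iterated partial derivatives. -/
theorem pdm_induction {N : ℕ} {P : ℕ → ((Euc N → ℝ) → (Euc N → ℝ)) → Prop} (h0 : P 0 id)
    (hs : ∀ n T i, P n T → P (n + 1) (pd i ∘ T)) (α : Fin N → ℕ) : P (msize α) (pdm α) := by
  have hiter : ∀ (i : Fin N) (a n : ℕ) (T : (Euc N → ℝ) → (Euc N → ℝ)), P n T →
      P (a + n) ((pd i)^[a] ∘ T) := by
    intro i a n T hT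
    induction a with
    | zero => simpa using hT
    | succ a ih =>
      rw [Function.iterate_succ', Nat.add_right_comm]
      exact hs _ _ i ih
  have hlist : ∀ l : List (Fin N), P (l.map α).sum
      ((l.map fun i => (pd i)^[α i]).foldr (· ∘ ·) id) := by
    intro l
    induction l with
    | nil => simpa using h0
    | cons i l ih => simpa using hiter i (α i) _ _ ih
  have h := hlist (List.finRange N)
  rw [← List.ofFn_eq_map, ← List.ofFn_eq_map, List.sum_ofFn] at h
  exact h

theorem contDiff_pd {N : ℕ} (i : Fin N) {f : Euc N → ℝ} (hf : ContDiff ℝ (⊤ : ℕ∞) f) :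
    ContDiff ℝ (⊤ : ℕ∞) (pd i f) :=
  (hf.fderiv_right (by simp)).clm_apply contDiff_const

theorem norm_iteratedFDeriv_pd_le {N : ℕ} (i : Fin N) {f : Euc N → ℝ}
    (hf : ContDiff ℝ (⊤ : ℕ∞) f) (k : ℕ) (x : Euc N) :
    ‖iteratedFDeriv ℝ k (pd i f) x‖ ≤ ‖iteratedFDeriv ℝ (k + 1) f x‖ := by
  have h := norm_iteratedFDeriv_clm_apply_const (𝕜 := ℝ) (f := fderiv ℝ f)
    (c := EuclideanSpace.single i (1 : ℝ)) (x := x) (N := ((⊤ : ℕ∞) : WithTop ℕ∞)) (n := k)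
    (hf.fderiv_right (by simp)).contDiffAt (by exact_mod_cast le_top)
  rw [norm_iteratedFDeriv_fderiv] at h
  simp only [PiLp.norm_single, norm_one, one_mul] at h
  exact h

theorem pdm_bound {N : ℕ} (α : Fin N → ℕ) {f : Euc N → ℝ} (hf : ContDiff ℝ (⊤ : ℕ∞) f) :
    ContDiff ℝ (⊤ : ℕ∞) (pdm α f) ∧ ∀ k x,
      ‖iteratedFDeriv ℝ k (pdm α f) x‖ ≤ ‖iteratedFDeriv ℝ (k + msize α) f x‖ := by
  refine pdm_induction (P := fun n T => ContDiff ℝ (⊤ : ℕ∞) (T f) ∧ ∀ k x,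
      ‖iteratedFDeriv ℝ k (T f) x‖ ≤ ‖iteratedFDeriv ℝ (k + n) f x‖) ⟨hf, fun k x => le_rfl⟩ ?_ α
  rintro n T i ⟨h1, h2⟩
  refine ⟨contDiff_pd i h1, fun k x => (norm_iteratedFDeriv_pd_le i h1 k x).trans ?_⟩
  have := h2 (k + 1) x
  rwa [Nat.add_right_comm] at this

theorem abs_pdm_le {N : ℕ} (α : Fin N → ℕ) {f : Euc N → ℝ} (hf : ContDiff ℝ (⊤ : ℕ∞) f)
    (x : Euc N) : |pdm α f x| ≤ ‖iteratedFDeriv ℝ (msize α) f x‖ := by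
  have h := (pdm_bound α hf).2 0 x
  rwa [norm_iteratedFDeriv_zero, zero_add] at h

theorem pdm_const_mul_comp_sub {N : ℕ} (α : Fin N → ℕ) (f : Euc N → ℝ) (c : ℝ) (a : Euc N) :
    pdm α (fun x => c * f (x - a)) = fun x => c * pdm α f (x - a) := by
  refine pdm_induction (P := fun _ T => T (fun x => c * f (x - a)) = fun x => c * T f (x - a))
    rfl ?_ α
  intro n T i h
  ext x
  have h1 : fderiv ℝ (fun x => c * T f (x - a)) x = c • fderiv ℝ (T f) (x - a) := by
    rw [← fderiv_comp_sub]
    exact congrFun (fderiv_const_smul_field (𝕜 := ℝ) (f := fun x => T f (x - a)) c) x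
  simp [pd, h, h1]

theorem pdm_tsum {N : ℕ} (α : Fin N → ℕ) {F : ℕ → Euc N → ℝ} {v : ℕ → ℕ → ℝ}
    (hF : ∀ j, ContDiff ℝ (⊤ : ℕ∞) (F j)) (hv : ∀ k, Summable (v k))
    (hb : ∀ k j x, ‖iteratedFDeriv ℝ k (F j) x‖ ≤ v k j) :
    pdm α (fun x => ∑' j, F j x) = fun x => ∑' j, pdm α (F j) x := by
  refine (pdm_induction (P := fun n T => (T (fun x => ∑' j, F j x) = fun x => ∑' j, T (F j) x) ∧
    (∀ j, ContDiff ℝ (⊤ : ℕ∞) (T (F j))) ∧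
    ∀ k j x, ‖iteratedFDeriv ℝ k (T (F j)) x‖ ≤ v (k + n) j) ⟨rfl, hF, hb⟩ ?_ α).1
  rintro n T i ⟨h1, h2, h3⟩
  have hs : ∀ x, Summable fun j => fderiv ℝ (T (F j)) x := fun x =>
    (hv (1 + n)).of_norm_bounded fun j => by
      have := h3 1 j x
      rwa [← zero_add 1, ← norm_iteratedFDeriv_fderiv, norm_iteratedFDeriv_zero, zero_add] at this
  have hs0 : Summable fun j => T (F j) 0 := (hv (0 + n)).of_norm_bounded fun j => by
      have := h3 0 j 0
      rwa [norm_iteratedFDeriv_zero] at this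
  refine ⟨?_, fun j => contDiff_pd i (h2 j), fun k j x =>
    (norm_iteratedFDeriv_pd_le i (h2 j) k x).trans ?_⟩
  · ext x
    have hd := fderiv_tsum_apply (𝕜 := ℝ) (hv (1 + n))
      (fun j => (h2 j).differentiable (by simp)) (fun j x => by
        have := h3 1 j x
        rwa [← zero_add 1, ← norm_iteratedFDeriv_fderiv, norm_iteratedFDeriv_zero, zero_add]
          at this) hs0 x
    simp only [Function.comp_apply, pd, h1, hd]
    exact ((ContinuousLinearMap.apply ℝ ℝ
      (EuclideanSpace.single i (1 : ℝ) : Euc N)).map_tsum (hs x))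
  · have := h3 (k + 1) j x
    rwa [Nat.add_right_comm] at this

theorem phiStar_nonneg {ω : ℝ → ℝ} (h1 : ω 1 = 0) (s : ℝ) : 0 ≤ phiStar ω s := by
  unfold phiStar
  by_cases h : BddAbove {y : ℝ | ∃ t : ℝ, 0 ≤ t ∧ y = s * t - ω (Real.exp t)}
  · exact le_csSup h ⟨0, le_rfl, by simp [h1]⟩
  · rw [Real.sSup_of_not_bddAbove h]

theorem IsWeightFun.exists_norm_le_add {ω : ℝ → ℝ} (hω : IsWeightFun ω) :
    ∃ K : ℝ, 1 ≤ K ∧ ∀ {N : ℕ} (x a : Euc N), ω ‖x‖ ≤ K * (1 + ω ‖x - a‖ + ω ‖a‖) := by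
  obtain ⟨K, hK, h⟩ := hω.alpha
  refine ⟨K, hK, fun x a => ?_⟩
  have hx : ‖x‖ ≤ ‖x - a‖ + ‖a‖ := by simpa using norm_add_le (x - a) a
  have h1 := hω.nonneg _ (norm_nonneg (x - a))
  have h2 := hω.nonneg _ (norm_nonneg a)
  rcases le_total ‖x - a‖ ‖a‖ with hle | hle
  · calc ω ‖x‖ ≤ ω (2 * ‖a‖) := hω.mono (norm_nonneg x)
          (mul_nonneg zero_le_two (norm_nonneg a)) (by linarith)
      _ ≤ K * (1 + ω ‖a‖) := h _ (norm_nonneg a)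
      _ ≤ _ := by gcongr; linarith
  · calc ω ‖x‖ ≤ ω (2 * ‖x - a‖) := hω.mono (norm_nonneg x)
          (mul_nonneg zero_le_two (norm_nonneg _)) (by linarith)
      _ ≤ K * (1 + ω ‖x - a‖) := h _ (norm_nonneg _)
      _ ≤ _ := mul_le_mul_of_nonneg_left (by linarith) (by linarith)

/-- Uniform seminorm bounds, in terms of full derivatives, which imply membership in `𝒮_ω`. -/
def RapidDecay (ω : ℝ → ℝ) {N : ℕ} (f : Euc N → ℝ) : Prop :=
  ∀ lam mu : ℝ, 0 < lam → 0 < mu → ∃ C : ℝ, ∀ (n : ℕ) (x : Euc N),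
    Real.exp (mu * ω ‖x‖) * ‖iteratedFDeriv ℝ n f x‖ ≤ C * Real.exp (lam * phiStar ω (n / lam))

/-- The weights of the series of translates centred at the points `a j`. -/
noncomputable def translateWeight (ω : ℝ → ℝ) {N : ℕ} (a : ℕ → Euc N) (j : ℕ) : ℝ :=
  (1 / 2) ^ j * Real.exp (-(j * ω ‖a j‖))

theorem translateWeight_pos (ω : ℝ → ℝ) {N : ℕ} (a : ℕ → Euc N) (j : ℕ) :
    0 < translateWeight ω a j := by
  unfold translateWeight; positivity

theorem translateWeight_le {ω : ℝ → ℝ} (hω : IsWeightFun ω) {N : ℕ} (a : ℕ → Euc N) (j : ℕ) :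
    translateWeight ω a j ≤ (1 / 2) ^ j := by
  unfold translateWeight
  have := hω.nonneg _ (norm_nonneg (a j))
  exact mul_le_of_le_one_right (by positivity)
    (Real.exp_le_one_iff.2 (neg_nonpos.2 (by positivity)))

theorem exists_exp_mul_translateWeight_le {ω : ℝ → ℝ} (hω : IsWeightFun ω) {N : ℕ}
    (a : ℕ → Euc N) (M : ℝ) :
    ∃ D : ℝ, 0 ≤ D ∧ ∀ j, Real.exp (M * ω ‖a j‖) * translateWeight ω a j ≤ D * (1 / 2) ^ j := by
  refine ⟨1 + ∑ i ∈ Finset.range ⌈M⌉₊, Real.exp (M * ω ‖a i‖), by positivity, fun j => ?_⟩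
  have hj := hω.nonneg _ (norm_nonneg (a j))
  rcases lt_or_ge j ⌈M⌉₊ with h | h
  · have h1 := Finset.single_le_sum (f := fun i => Real.exp (M * ω ‖a i‖))
      (fun i _ => (Real.exp_pos _).le) (Finset.mem_range.2 h)
    have h2 := translateWeight_le hω a j
    have h3 := (translateWeight_pos ω a j).le
    gcongr
    linarith
  · have h1 : M ≤ j := Nat.ceil_le.1 h
    have h2 : Real.exp (M * ω ‖a j‖) * translateWeight ω a j ≤ 1 * (1 / 2) ^ j := by
      rw [translateWeight, mul_left_comm, ← Real.exp_add, mul_comm]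
      gcongr
      rw [Real.exp_le_one_iff]
      nlinarith
    refine h2.trans ?_
    gcongr
    have : 0 ≤ ∑ i ∈ Finset.range ⌈M⌉₊, Real.exp (M * ω ‖a i‖) := by positivity
    linarith

theorem summable_half_pow (D : ℝ) : Summable fun j : ℕ => D * (1 / 2 : ℝ) ^ j :=
  summable_geometric_two.mul_left D

theorem tsum_half_pow (D : ℝ) : ∑' j : ℕ, D * (1 / 2 : ℝ) ^ j = D * 2 := by
  rw [tsum_mul_left, tsum_geometric_two]

/-- A weighted series of translates of a rapidly decaying function lies in `𝒮_ω`. -/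
theorem memS_tsum_translate {ω : ℝ → ℝ} (hω : IsWeightFun ω) {N : ℕ} {χ : Euc N → ℝ}
    (hχ : ContDiff ℝ (⊤ : ℕ∞) χ) (hd : RapidDecay ω χ) (a : ℕ → Euc N) :
    (∀ x, Summable fun j => translateWeight ω a j * χ (x - a j)) ∧
      MemS ω fun x => ∑' j, translateWeight ω a j * χ (x - a j) := by
  have hbdd : ∀ k, ∃ M, ∀ x, ‖iteratedFDeriv ℝ k χ x‖ ≤ M := by
    intro k
    obtain ⟨C, hC⟩ := hd 1 1 one_pos one_pos
    refine ⟨_, fun x => le_trans ?_ (hC k x)⟩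
    refine le_mul_of_one_le_left (norm_nonneg _) (Real.one_le_exp ?_)
    have := hω.nonneg _ (norm_nonneg x)
    linarith
  choose M hM using hbdd
  have hM0 : ∀ k, 0 ≤ M k := fun k => (norm_nonneg _).trans (hM k 0)
  have hF : ∀ j, ContDiff ℝ (⊤ : ℕ∞) fun x => translateWeight ω a j * χ (x - a j) := fun j =>
    contDiff_const.mul (hχ.comp (contDiff_id.sub contDiff_const))
  have hFb : ∀ k j x, ‖iteratedFDeriv ℝ k (fun x => translateWeight ω a j * χ (x - a j)) x‖ ≤
      M k * (1 / 2) ^ j := by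
    intro k j x
    have h := iteratedFDeriv_const_smul_apply' (𝕜 := ℝ) (i := k) (x := x)
      (a := translateWeight ω a j) (f := fun x => χ (x - a j))
      ((hχ.comp (contDiff_id.sub contDiff_const)).of_le (by exact_mod_cast le_top)).contDiffAt
    simp only [smul_eq_mul] at h
    rw [h, iteratedFDeriv_comp_sub, norm_smul, Real.norm_of_nonneg (translateWeight_pos ω a j).le,
      mul_comm]
    exact mul_le_mul (hM k _) (translateWeight_le hω a j) (translateWeight_pos ω a j).le (hM0 k)
  refine ⟨fun x => (summable_half_pow (M 0)).of_norm_bounded fun j => ?_, ?_, ?_⟩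
  · have := hFb 0 j x
    rwa [norm_iteratedFDeriv_zero] at this
  · exact contDiff_tsum hF (fun k _ => summable_half_pow (M k)) fun k j x _ => hFb k j x
  intro lam mu hlam hmu
  obtain ⟨K, hK1, hK⟩ := hω.exists_norm_le_add
  have hK0 : 0 < K := by linarith
  obtain ⟨D, hD0, hD⟩ := exists_exp_mul_translateWeight_le hω a (mu * K)
  obtain ⟨C, hC⟩ := hd lam (mu * K) hlam (by positivity)
  refine ⟨Real.exp (mu * K) * D * 2 * C, fun α x => ?_⟩
  rw [pdm_tsum α hF (fun k => summable_half_pow (M k)) hFb]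
  simp only [pdm_const_mul_comp_sub]
  set E := Real.exp (lam * phiStar ω (msize α / lam)) with hE
  have hterm : ∀ j, ‖Real.exp (mu * ω ‖x‖) * (translateWeight ω a j * pdm α χ (x - a j))‖ ≤
      Real.exp (mu * K) * D * C * E * (1 / 2) ^ j := by
    intro j
    have h1 : Real.exp (mu * K * ω ‖x - a j‖) * |pdm α χ (x - a j)| ≤ C * E :=
      (mul_le_mul_of_nonneg_left (abs_pdm_le α hχ _) (Real.exp_pos _).le).trans (hC _ _)
    have h2 := hD j
    have hw := (translateWeight_pos ω a j)
    rw [norm_mul, norm_mul, Real.norm_of_nonneg (Real.exp_pos _).le,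
      Real.norm_of_nonneg hw.le, Real.norm_eq_abs]
    calc Real.exp (mu * ω ‖x‖) * (translateWeight ω a j * |pdm α χ (x - a j)|)
        ≤ Real.exp (mu * (K * (1 + ω ‖x - a j‖ + ω ‖a j‖))) *
            (translateWeight ω a j * |pdm α χ (x - a j)|) := by
          gcongr
          exact hK x (a j)
      _ = Real.exp (mu * K) * (Real.exp (mu * K * ω ‖a j‖) * translateWeight ω a j) *
            (Real.exp (mu * K * ω ‖x - a j‖) * |pdm α χ (x - a j)|) := by
          rw [show mu * (K * (1 + ω ‖x - a j‖ + ω ‖a j‖)) =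
            mu * K + mu * K * ω ‖a j‖ + mu * K * ω ‖x - a j‖ by ring, Real.exp_add, Real.exp_add]
          ring
      _ ≤ Real.exp (mu * K) * (D * (1 / 2) ^ j) * (C * E) := by gcongr
      _ = _ := by ring
  have hsum := tsum_of_norm_bounded (summable_half_pow _).hasSum hterm
  rw [tsum_half_pow, tsum_mul_left, norm_mul, Real.norm_of_nonneg (Real.exp_pos _).le,
    Real.norm_eq_abs] at hsum
  calc _ ≤ _ := hsum
    _ = _ := by ring

theorem IsWeightFun.exists_le_linear {ω : ℝ → ℝ} (hω : IsWeightFun ω)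
    (hvan : ∀ t ∈ Set.Icc (0 : ℝ) 1, ω t = 0) :
    ∃ A : ℝ, 0 ≤ A ∧ ∀ t, 0 ≤ t → ω t ≤ A * (1 + t) := by
  set I := ∫ t in Ici (1 : ℝ), ω t / (1 + t ^ 2) with hI
  have hnn : ∀ t ∈ Ici (1 : ℝ), 0 ≤ ω t / (1 + t ^ 2) := fun t ht =>
    div_nonneg (hω.nonneg t (zero_le_one.trans ht)) (by positivity)
  have hI0 : 0 ≤ I := MeasureTheory.setIntegral_nonneg measurableSet_Ici hnn
  refine ⟨5 * I, by positivity, fun t ht => ?_⟩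
  rcases le_or_gt t 1 with h1 | h1
  · rw [hvan t ⟨ht, h1⟩]
    positivity
  have hsub : Icc t (2 * t) ⊆ Ici 1 := fun s hs => h1.le.trans hs.1
  have hint := hω.beta.mono_set hsub
  have hle := MeasureTheory.setIntegral_ge_of_const_le (c := ω t / (1 + (2 * t) ^ 2))
    measurableSet_Icc (by simp) (fun s hs => ?_) hint
  · have hle2 := hle.trans (MeasureTheory.setIntegral_mono_set hω.beta
      ((MeasureTheory.ae_restrict_iff' measurableSet_Ici).2 (Eventually.of_forall hnn))
      hsub.eventuallyLE)
    rw [← hI, MeasureTheory.measureReal_def, Real.volume_Icc,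
      ENNReal.toReal_ofReal (by linarith), smul_eq_mul, mul_div_assoc', div_le_iff₀ (by positivity)] at hle2
    have h3 : ω t * t ≤ (5 * I * (1 + t)) * t := by
      nlinarith [mul_nonneg hI0 ht, mul_nonneg hI0 (sub_nonneg.2 h1.le), mul_nonneg hI0 (mul_nonneg ht ht)]
    exact le_of_mul_le_mul_right h3 (by linarith)
  · have hs0 : 0 ≤ s := ht.trans hs.1
    have := hω.nonneg s hs0
    have hm := hω.mono ht hs0 hs.1
    have := hs.2
    gcongr

/-- The polynomial factor in the `n`-th derivative of `t ↦ exp (-t ^ 2 / 2)`. -/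
noncomputable def gaussPoly : ℕ → ℝ → ℝ
  | 0, _ => 1
  | 1, t => -t
  | n + 2, t => -t * gaussPoly (n + 1) t - (n + 1) * gaussPoly n t

theorem hasDerivAt_gaussPoly (n : ℕ) (t : ℝ) :
    HasDerivAt (gaussPoly (n + 1)) (-(n + 1) * gaussPoly n t) t := by
  induction n using Nat.twoStepInduction with
  | zero =>
    have : gaussPoly 1 = fun t => -t := by ext; simp [gaussPoly]
    rw [this]
    refine (hasDerivAt_id t).neg.congr_deriv ?_
    simp [gaussPoly]
  | one =>
    have : gaussPoly 2 = fun t => t * t - 1 := by ext; simp [gaussPoly]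
    rw [this]
    refine (((hasDerivAt_id t).mul (hasDerivAt_id t)).sub_const 1).congr_deriv ?_
    simp [gaussPoly]
    ring
  | more n ih0 ih1 =>
    have : gaussPoly (n + 3) = fun t =>
        -t * gaussPoly (n + 2) t - ((n + 1 : ℕ) + 1) * gaussPoly (n + 1) t := by
      ext; rw [gaussPoly]
    rw [this]
    refine (((hasDerivAt_id t).neg.mul ih1).sub (ih0.const_mul _)).congr_deriv ?_
    have h2 : gaussPoly (n + 2) t = -t * gaussPoly (n + 1) t - (n + 1) * gaussPoly n t := by
      rw [gaussPoly]
    simp only [Pi.neg_apply, id, h2]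
    push_cast
    ring

theorem abs_gaussPoly_le (n : ℕ) (t : ℝ) : |gaussPoly n t| ≤ (|t| + √n) ^ n := by
  induction n using Nat.twoStepInduction with
  | zero => simp [gaussPoly]
  | one => simp [gaussPoly]
  | more n ih0 ih1 =>
    rw [gaussPoly]
    set s := √((n + 2 : ℕ) : ℝ) with hs
    have hs0 : 0 ≤ s := Real.sqrt_nonneg _
    have ht0 := abs_nonneg t
    have hs2 : s ^ 2 = n + 2 := by rw [hs, Real.sq_sqrt (by positivity)]; push_cast; ring
    have h0 : |gaussPoly n t| ≤ (|t| + s) ^ n := ih0.trans (by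
      gcongr
      exact Real.sqrt_le_sqrt (by push_cast; linarith))
    have h1 : |gaussPoly (n + 1) t| ≤ (|t| + s) ^ (n + 1) := ih1.trans (by
      gcongr
      exact Real.sqrt_le_sqrt (by push_cast; linarith))
    have hP : 0 ≤ (|t| + s) ^ n := by positivity
    calc |-t * gaussPoly (n + 1) t - (n + 1) * gaussPoly n t|
        ≤ |t| * |gaussPoly (n + 1) t| + (n + 1) * |gaussPoly n t| := by
          refine (abs_sub _ _).trans ?_
          rw [abs_mul, abs_mul, abs_neg, abs_of_nonneg (by positivity : (0 : ℝ) ≤ n + 1)]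
      _ ≤ |t| * (|t| + s) ^ (n + 1) + s ^ 2 * (|t| + s) ^ n := by
          gcongr
          linarith
      _ = (|t| + s) ^ n * (|t| * (|t| + s) + s ^ 2) := by ring
      _ ≤ (|t| + s) ^ n * (|t| + s) ^ 2 := by
          gcongr
          nlinarith [mul_nonneg ht0 hs0]
      _ = (|t| + s) ^ (n + 2) := by ring

theorem iteratedDeriv_gauss (n : ℕ) :
    iteratedDeriv n (fun t : ℝ => Real.exp (-t ^ 2 / 2)) =
      fun t => gaussPoly n t * Real.exp (-t ^ 2 / 2) := by
  have hexp : ∀ t : ℝ, HasDerivAt (fun t : ℝ => Real.exp (-t ^ 2 / 2))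
      (Real.exp (-t ^ 2 / 2) * -t) t := fun t => by
    refine (((hasDerivAt_pow 2 t).neg.div_const 2).exp).congr_deriv ?_
    simp
    ring
  induction n with
  | zero => simp [gaussPoly]
  | succ n ih =>
    rw [iteratedDeriv_succ, ih]
    ext t
    cases n with
    | zero => simpa [gaussPoly, mul_comm] using (hexp t).deriv
    | succ n =>
      refine ((hasDerivAt_gaussPoly n t).mul (hexp t)).deriv.trans ?_
      rw [gaussPoly]
      ring

/-- Derivative bounds of order `o(ε ^ n n!)` for all `ε`, with an exponential weight. -/
def EntireBound {E : Type*} [NormedAddCommGroup E] [NormedSpace ℝ E] (w : E → ℝ)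
    (f : E → ℝ) : Prop :=
  ∀ δ : ℝ, 0 < δ → ∃ C : ℝ, 0 ≤ C ∧ ∀ (n : ℕ) (x : E),
    ‖iteratedFDeriv ℝ n f x‖ ≤ C * n.factorial * δ ^ n * Real.exp (-w x)

theorem entireBound_gauss :
    EntireBound (fun t : ℝ => t ^ 2 / 4) fun t => Real.exp (-t ^ 2 / 2) := by
  intro δ' hδ'
  obtain ⟨δ, hδ, rfl⟩ : ∃ δ, 0 < δ ∧ δ' = Real.exp 1 * δ :=
    ⟨δ' / Real.exp 1, by positivity, by field_simp⟩
  refine ⟨Real.exp (2 / δ ^ 2), by positivity, fun n t => ?_⟩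
  rw [norm_iteratedFDeriv_eq_norm_iteratedDeriv, iteratedDeriv_gauss, norm_mul,
    Real.norm_of_nonneg (Real.exp_pos _).le, Real.norm_eq_abs]
  have h1 : (|t| + √n) ^ n ≤ n.factorial * δ ^ n * Real.exp ((|t| + √n) / δ) := by
    have h := Real.pow_div_factorial_le_exp ((|t| + √(n : ℝ)) / δ) (by positivity) n
    rw [div_le_iff₀ (by positivity), div_pow, div_le_iff₀ (by positivity)] at h
    linarith
  have h2 : (|t| + √n) / δ + -t ^ 2 / 2 ≤ 2 / δ ^ 2 + n + -(t ^ 2 / 4) := by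
    have hn : √(n : ℝ) ^ 2 = n := Real.sq_sqrt (by positivity)
    have e1 := sq_nonneg (|t| / 2 - δ⁻¹)
    have e2 := sq_nonneg (√(n : ℝ) - δ⁻¹ / 2)
    have e3 := sq_nonneg δ⁻¹
    rw [← sq_abs t, div_eq_mul_inv, div_eq_mul_inv 2, ← inv_pow]
    nlinarith
  calc |gaussPoly n t| * Real.exp (-t ^ 2 / 2)
      ≤ (n.factorial * δ ^ n * Real.exp ((|t| + √n) / δ)) * Real.exp (-t ^ 2 / 2) := by
        gcongr
        exact (abs_gaussPoly_le n t).trans h1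
    _ = n.factorial * δ ^ n * Real.exp ((|t| + √n) / δ + -t ^ 2 / 2) := by
        rw [Real.exp_add]; ring
    _ ≤ n.factorial * δ ^ n * Real.exp (2 / δ ^ 2 + n + -(t ^ 2 / 4)) := by gcongr
    _ = _ := by
        rw [Real.exp_add, Real.exp_add, mul_pow, ← Real.exp_nat_mul, mul_one]; ring

theorem EntireBound.mul {E : Type*} [NormedAddCommGroup E] [NormedSpace ℝ E] {w₁ w₂ f g : E → ℝ}
    (hf : ContDiff ℝ (⊤ : ℕ∞) f) (hg : ContDiff ℝ (⊤ : ℕ∞) g) (h₁ : EntireBound w₁ f)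
    (h₂ : EntireBound w₂ g) : EntireBound (fun x => w₁ x + w₂ x) fun x => f x * g x := by
  intro δ hδ
  obtain ⟨C, hC0, hC⟩ := h₁ (δ / 2) (by positivity)
  obtain ⟨D, hD0, hD⟩ := h₂ (δ / 2) (by positivity)
  refine ⟨C * D, by positivity, fun n x => ?_⟩
  refine (norm_iteratedFDeriv_mul_le hf hg x (by exact_mod_cast le_top)).trans ?_
  calc ∑ i ∈ Finset.range (n + 1), (n.choose i : ℝ) * ‖iteratedFDeriv ℝ i f x‖ *
          ‖iteratedFDeriv ℝ (n - i) g x‖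
      ≤ ∑ i ∈ Finset.range (n + 1),
          C * D * n.factorial * (δ / 2) ^ n * Real.exp (-(w₁ x + w₂ x)) := by
        refine Finset.sum_le_sum fun i hi => ?_
        have hi : i ≤ n := Nat.lt_succ_iff.1 (Finset.mem_range.1 hi)
        calc _ ≤ (n.choose i : ℝ) * (C * i.factorial * (δ / 2) ^ i * Real.exp (-w₁ x)) *
              (D * (n - i).factorial * (δ / 2) ^ (n - i) * Real.exp (-w₂ x)) := by
              gcongr
              exacts [hC i x, hD (n - i) x]
          _ = C * D * (n.choose i * i.factorial * (n - i).factorial : ℝ) *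
              ((δ / 2) ^ i * (δ / 2) ^ (n - i)) * (Real.exp (-w₁ x) * Real.exp (-w₂ x)) := by ring
          _ = _ := by
              rw [← pow_add, Nat.add_sub_cancel' hi, ← Real.exp_add, neg_add]
              norm_cast
              rw [Nat.choose_mul_factorial_mul_factorial hi]
    _ = C * D * n.factorial * ((n + 1) * (δ / 2) ^ n) * Real.exp (-(w₁ x + w₂ x)) := by
        rw [Finset.sum_const, Finset.card_range, nsmul_eq_mul]
        push_cast
        ring
    _ ≤ _ := by
        gcongr
        have : (n + 1 : ℝ) ≤ 2 ^ n := by exact_mod_cast Nat.lt_two_pow_self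
        rw [div_pow, mul_div_assoc', div_le_iff₀ (by positivity), mul_comm]
        gcongr

theorem entireBound_gauss_coord {N : ℕ} (i : Fin N) :
    EntireBound (fun x : Euc N => x i ^ 2 / 4) fun x => Real.exp (-x i ^ 2 / 2) := by
  intro δ hδ
  obtain ⟨C, hC0, hC⟩ := entireBound_gauss δ hδ
  refine ⟨C, hC0, fun n x => le_trans ?_ (hC n (x i))⟩
  have hg : ContDiff ℝ (⊤ : ℕ∞) fun t : ℝ => Real.exp (-t ^ 2 / 2) := by fun_prop
  have h := (EuclideanSpace.proj i : Euc N →L[ℝ] ℝ).iteratedFDeriv_comp_right hg x (i := n)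
    (by exact_mod_cast le_top)
  have hp : ‖(EuclideanSpace.proj i : Euc N →L[ℝ] ℝ)‖ ≤ 1 :=
    ContinuousLinearMap.opNorm_le_bound _ zero_le_one fun x => by
      simpa using PiLp.norm_apply_le x i
  change ‖iteratedFDeriv ℝ n ((fun t : ℝ => Real.exp (-t ^ 2 / 2)) ∘
    (EuclideanSpace.proj i : Euc N →L[ℝ] ℝ)) x‖ ≤ _
  rw [h]
  refine (ContinuousMultilinearMap.norm_compContinuousLinearMap_le _ _).trans ?_
  refine mul_le_of_le_one_right (norm_nonneg _) ?_
  rw [Finset.prod_const]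
  exact pow_le_one₀ (norm_nonneg _) hp

theorem entireBound_prod_gauss {N : ℕ} (s : Finset (Fin N)) :
    EntireBound (fun x : Euc N => ∑ i ∈ s, x i ^ 2 / 4)
      fun x => ∏ i ∈ s, Real.exp (-x i ^ 2 / 2) := by
  classical
  induction s using Finset.induction_on with
  | empty =>
    refine fun δ hδ => ⟨1, zero_le_one, fun n x => ?_⟩
    rcases n with _ | n
    · simp
    · simp only [Finset.prod_empty]
      rw [iteratedFDeriv_const_of_ne (Nat.succ_ne_zero n)]
      simp only [Pi.zero_apply, norm_zero]
      positivity
  | insert i s hi ih =>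
    simp only [Finset.sum_insert hi, Finset.prod_insert hi]
    exact (entireBound_gauss_coord i).mul (by fun_prop) (by fun_prop) ih

/-- For weights whose Young conjugate is finite, the Gaussian decays rapidly. -/
theorem exists_rapidDecay_of_bddAbove {N : ℕ} {ω : ℝ → ℝ} (hω : IsWeightFun ω)
    (hvan : ∀ t ∈ Set.Icc (0 : ℝ) 1, ω t = 0)
    (hb : ∀ s, BddAbove {y : ℝ | ∃ t : ℝ, 0 ≤ t ∧ y = s * t - ω (Real.exp t)}) :
    ∃ χ : Euc N → ℝ, ContDiff ℝ (⊤ : ℕ∞) χ ∧ (∀ x, 0 ≤ χ x) ∧ 0 < χ 0 ∧ RapidDecay ω χ := by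
  obtain ⟨A, hA0, hA⟩ := hω.exists_le_linear hvan
  refine ⟨fun x => ∏ i, Real.exp (-x i ^ 2 / 2), by fun_prop, fun x => by positivity,
    by positivity, fun lam mu hlam hmu => ?_⟩
  obtain ⟨C, hC0, hC⟩ := entireBound_prod_gauss (N := N) Finset.univ (Real.exp (-(lam * A)))
    (Real.exp_pos _)
  have hweight : ∀ x : Euc N, mu * ω ‖x‖ - ∑ i, x i ^ 2 / 4 ≤ mu * A + (mu * A) ^ 2 := by
    intro x
    have h1 : ∑ i, x i ^ 2 / 4 = ‖x‖ ^ 2 / 4 := by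
      rw [EuclideanSpace.norm_sq_eq, Finset.sum_div]
      simp
    have h2 := mul_le_mul_of_nonneg_left (hA ‖x‖ (norm_nonneg x)) hmu.le
    rw [h1]
    nlinarith [sq_nonneg (mu * A - ‖x‖ / 2)]
  have hfac : ∀ n : ℕ, n.factorial * Real.exp (-(lam * A)) ^ n ≤
      Real.exp (lam * A) * Real.exp (lam * phiStar ω (n / lam)) := by
    intro n
    rcases Nat.eq_zero_or_pos n with rfl | hn
    · have h1 := phiStar_nonneg (hvan 1 ⟨zero_le_one, le_rfl⟩) ((0 : ℕ) / lam)
      rw [← Real.exp_add]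
      simpa using Real.one_le_exp (by positivity : 0 ≤ lam * A + lam * phiStar ω ((0 : ℕ) / lam))
    have hn1 : (1 : ℝ) ≤ n := by exact_mod_cast hn
    have hn0 : (0 : ℝ) < n := by linarith
    have h1 : (n : ℝ) / lam * Real.log n - ω n ≤ phiStar ω (n / lam) :=
      le_csSup (hb _) ⟨Real.log n, Real.log_nonneg hn1, by rw [Real.exp_log hn0]⟩
    have h2 := mul_le_mul_of_nonneg_left h1 hlam.le
    have h3 := mul_le_mul_of_nonneg_left (hA n hn0.le) hlam.le
    have h4 : lam * ((n : ℝ) / lam * Real.log n - ω n) = n * Real.log n - lam * ω n := by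
      field_simp
    calc (n.factorial : ℝ) * Real.exp (-(lam * A)) ^ n
        ≤ (n : ℝ) ^ n * Real.exp (-(lam * A)) ^ n := by
          gcongr
          exact_mod_cast n.factorial_le_pow
      _ = Real.exp (n * Real.log n + n * -(lam * A)) := by
          rw [Real.exp_add, Real.exp_nat_mul, Real.exp_nat_mul, Real.exp_log hn0]
      _ ≤ Real.exp (lam * A + lam * phiStar ω (n / lam)) := by
          apply Real.exp_le_exp.2
          nlinarith
      _ = _ := Real.exp_add _ _
  refine ⟨C * Real.exp (mu * A + (mu * A) ^ 2) * Real.exp (lam * A), fun n x => ?_⟩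
  calc _ ≤ Real.exp (mu * ω ‖x‖) * (C * n.factorial * Real.exp (-(lam * A)) ^ n *
        Real.exp (-∑ i, x i ^ 2 / 4)) := by
        gcongr
        exact hC n x
    _ = C * (n.factorial * Real.exp (-(lam * A)) ^ n) *
        Real.exp (mu * ω ‖x‖ - ∑ i, x i ^ 2 / 4) := by
        rw [sub_eq_add_neg, Real.exp_add]; ring
    _ ≤ C * (Real.exp (lam * A) * Real.exp (lam * phiStar ω (n / lam))) *
        Real.exp (mu * A + (mu * A) ^ 2) := by
        have h1 := hfac n
        have h2 := Real.exp_le_exp.2 (hweight x)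
        exact mul_le_mul (mul_le_mul_of_nonneg_left h1 hC0) h2 (by positivity) (by positivity)
    _ = _ := by ring

/-- Band-limited functions: polynomial decay of all derivatives, with geometric gain. -/
theorem exists_bandLimited (N : ℕ) : ∃ g : Euc N → ℝ, ContDiff ℝ (⊤ : ℕ∞) g ∧ g 0 ≠ 0 ∧
    ∀ p : ℕ, ∃ C : ℝ, 0 ≤ C ∧ ∀ (n : ℕ) (x : Euc N),
      (1 + ‖x‖) ^ p * ‖iteratedFDeriv ℝ n g x‖ ≤ C * (1 / 2) ^ n := by
  let b : ContDiffBump (0 : Euc N) := ⟨1 / 2, 1, by norm_num, by norm_num⟩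
  set f : Euc N → ℂ := fun v => (b v : ℂ) with hf
  have hfs : ContDiff ℝ (⊤ : ℕ∞) f := Complex.ofRealCLM.contDiff.comp b.contDiff
  have hfc : HasCompactSupport f := b.hasCompactSupport.comp_left (g := fun t : ℝ => (t : ℂ)) rfl
  have hint : ∀ k n : ℕ, MeasureTheory.Integrable fun v => ‖v‖ ^ k * ‖iteratedFDeriv ℝ n f v‖ := by
    intro k n
    have hc : Continuous (iteratedFDeriv ℝ n f) :=
      hfs.continuous_iteratedFDeriv (by exact_mod_cast le_top)
    exact ((continuous_norm.pow k).mul hc.norm).integrable_of_hasCompactSupport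
      ((hfc.iteratedFDeriv n).norm.mul_left)
  have hsupp : ∀ (n : ℕ) (v : Euc N), 1 < ‖v‖ → iteratedFDeriv ℝ n f v = 0 := by
    intro n v hv
    by_contra hne
    have h1 : v ∈ tsupport f := support_iteratedFDeriv_subset n hne
    have h2 : tsupport f ⊆ Metric.closedBall 0 1 := by
      refine (closure_mono fun w hw => ?_).trans b.tsupport_eq.subset
      intro h0
      exact hw (by simp [hf, h0])
    have := h2 h1
    rw [mem_closedBall_zero_iff] at this
    linarith
  have hle : ∀ k n : ℕ, ∫ v, ‖v‖ ^ k * ‖iteratedFDeriv ℝ n f v‖ ≤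
      ∫ v, ‖iteratedFDeriv ℝ n f v‖ := by
    intro k n
    refine MeasureTheory.integral_mono (hint k n) (by simpa using hint 0 n) fun v => ?_
    rcases le_or_gt ‖v‖ 1 with h | h
    · exact mul_le_of_le_one_left (norm_nonneg _) (pow_le_one₀ (norm_nonneg _) h)
    · simp [hsupp n v h]
  set F : Euc N → ℂ := FourierTransform.fourier f with hFdef
  have hF : ContDiff ℝ (⊤ : ℕ∞) F := Real.contDiff_fourier fun n _ => by
    simpa using hint n 0
  have hFb : ∀ p : ℕ, ∃ C : ℝ, 0 ≤ C ∧ ∀ (k : ℕ) (x : Euc N),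
      ‖x‖ ^ p * ‖iteratedFDeriv ℝ k F x‖ ≤ C * (2 * π * 3) ^ k := by
    intro p
    set J := ∑ q ∈ Finset.range (p + 1), ∫ v, ‖iteratedFDeriv ℝ q f v‖ with hJ
    have hJ0 : 0 ≤ J := Finset.sum_nonneg fun q _ =>
      MeasureTheory.integral_nonneg fun v => norm_nonneg _
    refine ⟨2 ^ p * ((p + 1).factorial * Real.exp 1) * J, by positivity, fun k x => ?_⟩
    have h := Real.pow_mul_norm_iteratedFDeriv_fourier_le (K := ⊤) (N := ⊤) hfs
      (fun k n _ _ => hint k n) (k := k) (n := p) le_top le_top x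
    have hsum : ∑ q ∈ Finset.range (k + 1) ×ˢ Finset.range (p + 1),
        ∫ v, ‖v‖ ^ q.1 * ‖iteratedFDeriv ℝ q.2 f v‖ ≤ (k + 1) * J := by
      rw [Finset.sum_product]
      refine (Finset.sum_le_sum fun i _ => Finset.sum_le_sum fun q _ => hle i q).trans ?_
      simp [hJ]
    have hk : ((k : ℝ) + 1) ^ (p + 1) ≤ (p + 1).factorial * Real.exp 1 * 3 ^ k := by
      have h1 := Real.pow_div_factorial_le_exp ((k : ℝ) + 1) (by positivity) (p + 1)
      rw [div_le_iff₀ (by positivity), Real.exp_add, ← mul_one (k : ℝ), Real.exp_nat_mul] at h1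
      have h2 : Real.exp 1 ^ k ≤ 3 ^ k := by
        gcongr
        exact Real.exp_one_lt_three.le
      rw [mul_one] at h1
      calc _ ≤ _ := h1
        _ ≤ 3 ^ k * Real.exp 1 * (p + 1).factorial := by gcongr
        _ = _ := by ring
    calc _ ≤ _ := h
      _ ≤ (2 * π) ^ k * (2 * k + 2) ^ p * ((k + 1) * J) := by gcongr
      _ = (2 * π) ^ k * 2 ^ p * J * (k + 1) ^ (p + 1) := by
          rw [show (2 * k + 2 : ℝ) = 2 * (k + 1) by ring, mul_pow 2 ((k : ℝ) + 1)]; ring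
      _ ≤ (2 * π) ^ k * 2 ^ p * J * ((p + 1).factorial * Real.exp 1 * 3 ^ k) := by gcongr
      _ = _ := by rw [mul_pow _ (3 : ℝ)]; ring
  have hF0 : (F 0).re ≠ 0 := by
    have : F 0 = ((∫ v, b v : ℝ) : ℂ) := by
      rw [hFdef, Real.fourier_eq]
      simp only [inner_zero_right, neg_zero, AddChar.map_zero_eq_one, one_smul, hf]
      exact integral_ofReal
    rw [this, Complex.ofReal_re]
    exact b.integral_pos.ne'
  set ε : ℝ := (2 * π * 3 * 2)⁻¹ with hε
  have hε0 : 0 < ε := by positivity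
  have hε1 : ε ≤ 1 := inv_le_one_of_one_le₀ (by nlinarith [Real.pi_gt_three])
  have hG : ContDiff ℝ (⊤ : ℕ∞) fun x => F (ε • x) := hF.comp (contDiff_const_smul ε)
  refine ⟨fun x => (F (ε • x)).re, Complex.reCLM.contDiff.comp hG, by simpa using hF0,
    fun p => ?_⟩
  obtain ⟨C, hC0, hC⟩ := hFb p
  obtain ⟨D, hD0, hD⟩ := hFb 0
  refine ⟨ε⁻¹ ^ p * 2 ^ p * (C + D), by positivity, fun n x => ?_⟩
  have h1 : ‖iteratedFDeriv ℝ n (fun x => (F (ε • x)).re) x‖ ≤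
      ε ^ n * ‖iteratedFDeriv ℝ n F (ε • x)‖ := by
    have h := Complex.reCLM.norm_iteratedFDeriv_comp_left (x := x) (n := n) hG.contDiffAt
      (by exact_mod_cast le_top)
    rw [Complex.reCLM_norm, one_mul, iteratedFDeriv_comp_const_smul ε
      (hF.of_le (by exact_mod_cast le_top)), norm_smul, Real.norm_of_nonneg (by positivity)] at h
    exact h
  set y := ε • x with hy
  have hx : 1 + ‖x‖ ≤ ε⁻¹ * (1 + ‖y‖) := by
    rw [hy, norm_smul, Real.norm_of_nonneg hε0.le, mul_add, inv_mul_cancel_left₀ hε0.ne', mul_one]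
    gcongr
    exact (one_le_inv₀ hε0).2 hε1
  have hy2 : (1 + ‖y‖) ^ p ≤ 2 ^ p * (‖y‖ ^ p + ‖y‖ ^ 0) := by
    have hyn := norm_nonneg y
    rcases le_total ‖y‖ 1 with h | h
    · have : (1 + ‖y‖) ^ p ≤ 2 ^ p := by gcongr; linarith
      have h3 : (0 : ℝ) ≤ 2 ^ p * ‖y‖ ^ p := by positivity
      rw [pow_zero]
      linarith
    · have : (1 + ‖y‖) ^ p ≤ (2 * ‖y‖) ^ p := by gcongr; linarith
      rw [mul_pow] at this
      have h3 : (0 : ℝ) ≤ 2 ^ p := by positivity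
      rw [pow_zero]
      linarith
  have hpow : ε ^ n * (2 * π * 3) ^ n = (1 / 2) ^ n := by
    rw [← mul_pow, hε]
    congr 1
    field_simp
  calc (1 + ‖x‖) ^ p * ‖iteratedFDeriv ℝ n (fun x => (F (ε • x)).re) x‖
      ≤ (ε⁻¹ * (1 + ‖y‖)) ^ p * (ε ^ n * ‖iteratedFDeriv ℝ n F y‖) := by gcongr
    _ = ε⁻¹ ^ p * ε ^ n * ((1 + ‖y‖) ^ p * ‖iteratedFDeriv ℝ n F y‖) := by rw [mul_pow]; ring
    _ ≤ ε⁻¹ ^ p * ε ^ n * (2 ^ p * (‖y‖ ^ p + ‖y‖ ^ 0) * ‖iteratedFDeriv ℝ n F y‖) := by gcongr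
    _ = ε⁻¹ ^ p * ε ^ n * 2 ^ p * (‖y‖ ^ p * ‖iteratedFDeriv ℝ n F y‖ +
          ‖y‖ ^ 0 * ‖iteratedFDeriv ℝ n F y‖) := by ring
    _ ≤ ε⁻¹ ^ p * ε ^ n * 2 ^ p * (C * (2 * π * 3) ^ n + D * (2 * π * 3) ^ n) := by
        exact mul_le_mul_of_nonneg_left (add_le_add (hC n y) (hD n y)) (by positivity)
    _ = ε⁻¹ ^ p * 2 ^ p * (C + D) * (ε ^ n * (2 * π * 3) ^ n) := by ring
    _ = _ := by rw [hpow]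

/-- If the Young conjugate is infinite somewhere, the weight grows at most logarithmically. -/
theorem IsWeightFun.exists_le_log {ω : ℝ → ℝ} (hω : IsWeightFun ω)
    (hvan : ∀ t ∈ Set.Icc (0 : ℝ) 1, ω t = 0) {s : ℝ}
    (hb : ¬ BddAbove {y : ℝ | ∃ t : ℝ, 0 ≤ t ∧ y = s * t - ω (Real.exp t)}) :
    ∀ t, 0 ≤ t → ω t ≤ |s| * Real.log (1 + t) := by
  have hφ : ∀ τ, 0 ≤ τ → ω (Real.exp τ) ≤ s * τ := by
    intro τ hτ
    by_contra! hlt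
    have h0 : ω (Real.exp 0) = 0 := by
      rw [Real.exp_zero]; exact hvan 1 ⟨zero_le_one, le_rfl⟩
    have hτ0 : 0 < τ := hτ.lt_of_ne (by rintro rfl; rw [h0, mul_zero] at hlt; exact lt_irrefl _ hlt)
    refine hb ⟨|s| * τ, ?_⟩
    rintro _ ⟨t, ht, rfl⟩
    rcases le_total t τ with h | h
    · have h1 := hω.nonneg _ (Real.exp_pos t).le
      have h2 : s * t ≤ |s| * τ := mul_le_mul (le_abs_self s) h ht (abs_nonneg s)
      linarith
    · have ht0 : 0 < t := hτ0.trans_le h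
      have h1 := hω.delta.secant_mono (mem_univ 0) (mem_univ τ) (mem_univ t) hτ0.ne' ht0.ne' h
      simp only [h0, sub_zero] at h1
      have h2 : s < ω (Real.exp τ) / τ := (lt_div_iff₀ hτ0).2 hlt
      have h3 := (lt_div_iff₀ ht0).1 (h2.trans_le h1)
      have h4 : 0 ≤ |s| * τ := by positivity
      linarith
  intro t ht
  rcases le_or_gt t 1 with h | h
  · rw [hvan t ⟨ht, h⟩]
    exact mul_nonneg (abs_nonneg s) (Real.log_nonneg (by linarith))
  · have h1 := hφ (Real.log t) (Real.log_nonneg h.le)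
    rw [Real.exp_log (by linarith)] at h1
    exact h1.trans (mul_le_mul (le_abs_self s) (Real.log_le_log (by linarith) (by linarith))
      (Real.log_nonneg h.le) (abs_nonneg s))

/-- For logarithmically bounded weights, squares of band-limited functions decay rapidly. -/
theorem exists_rapidDecay_of_le_log {N : ℕ} {ω : ℝ → ℝ}
    (hvan : ∀ t ∈ Set.Icc (0 : ℝ) 1, ω t = 0) {A : ℝ}
    (hlog : ∀ t, 0 ≤ t → ω t ≤ A * Real.log (1 + t)) :
    ∃ χ : Euc N → ℝ, ContDiff ℝ (⊤ : ℕ∞) χ ∧ (∀ x, 0 ≤ χ x) ∧ 0 < χ 0 ∧ RapidDecay ω χ := by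
  obtain ⟨g, hg, hg0, hb⟩ := exists_bandLimited N
  refine ⟨fun x => g x * g x, hg.mul hg, fun x => mul_self_nonneg _, mul_self_pos.2 hg0,
    fun lam mu hlam hmu => ?_⟩
  obtain ⟨C, hC0, hC⟩ := hb ⌈mu * A⌉₊
  obtain ⟨D, hD0, hD⟩ := hb 0
  refine ⟨C * D, fun n x => ?_⟩
  set p := ⌈mu * A⌉₊
  have hx : 0 < 1 + ‖x‖ := by positivity
  have hexp : Real.exp (mu * ω ‖x‖) ≤ (1 + ‖x‖) ^ p := by
    rw [← Real.exp_log hx, ← Real.exp_nat_mul, Real.exp_le_exp]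
    have h1 := mul_le_mul_of_nonneg_left (hlog ‖x‖ (norm_nonneg x)) hmu.le
    have h2 : mu * A ≤ p := Nat.le_ceil _
    have h3 : 0 ≤ Real.log (1 + ‖x‖) := Real.log_nonneg (by linarith [norm_nonneg x])
    nlinarith
  have hone : 1 ≤ Real.exp (lam * phiStar ω (n / lam)) := Real.one_le_exp
    (mul_nonneg hlam.le (phiStar_nonneg (hvan 1 ⟨zero_le_one, le_rfl⟩) _))
  have hprod := norm_iteratedFDeriv_mul_le hg hg x (n := n) (by exact_mod_cast le_top)
  have hchoose : ∑ i ∈ Finset.range (n + 1), (n.choose i : ℝ) = 2 ^ n := by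
    exact_mod_cast Nat.sum_range_choose n
  calc Real.exp (mu * ω ‖x‖) * ‖iteratedFDeriv ℝ n (fun x => g x * g x) x‖
      ≤ (1 + ‖x‖) ^ p * ∑ i ∈ Finset.range (n + 1), (n.choose i : ℝ) *
          ‖iteratedFDeriv ℝ i g x‖ * ‖iteratedFDeriv ℝ (n - i) g x‖ := by gcongr
    _ = ∑ i ∈ Finset.range (n + 1), (n.choose i : ℝ) *
          (((1 + ‖x‖) ^ p * ‖iteratedFDeriv ℝ i g x‖) *
            ((1 + ‖x‖) ^ 0 * ‖iteratedFDeriv ℝ (n - i) g x‖)) := by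
        rw [Finset.mul_sum]
        exact Finset.sum_congr rfl fun i _ => by ring
    _ ≤ ∑ i ∈ Finset.range (n + 1), (n.choose i : ℝ) *
          ((C * (1 / 2) ^ i) * (D * (1 / 2) ^ (n - i))) := by
        exact Finset.sum_le_sum fun i _ => mul_le_mul_of_nonneg_left
          (mul_le_mul (hC i x) (hD (n - i) x) (by positivity) (by positivity)) (by positivity)
    _ = ∑ i ∈ Finset.range (n + 1), (n.choose i : ℝ) * (C * D * (1 / 2) ^ n) := by
        refine Finset.sum_congr rfl fun i hi => ?_
        have hi : i ≤ n := Nat.lt_succ_iff.1 (Finset.mem_range.1 hi)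
        have hpow : (1 / 2 : ℝ) ^ n = (1 / 2) ^ i * (1 / 2) ^ (n - i) := by
          rw [← pow_add, Nat.add_sub_cancel' hi]
        rw [hpow]
        ring
    _ = C * D := by
        rw [← Finset.sum_mul, hchoose, one_div_pow]
        field_simp
    _ ≤ _ := le_mul_of_one_le_right (by positivity) hone

theorem exists_rapidDecay_pos {N : ℕ} {ω : ℝ → ℝ} (hω : IsWeightFun ω)
    (hvan : ∀ t ∈ Set.Icc (0 : ℝ) 1, ω t = 0) :
    ∃ χ : Euc N → ℝ, ContDiff ℝ (⊤ : ℕ∞) χ ∧ (∀ x, 0 ≤ χ x) ∧ 0 < χ 0 ∧ RapidDecay ω χ := by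
  by_cases hb : ∀ s, BddAbove {y : ℝ | ∃ t : ℝ, 0 ≤ t ∧ y = s * t - ω (Real.exp t)}
  · exact exists_rapidDecay_of_bddAbove hω hvan hb
  · push Not at hb
    obtain ⟨s, hs⟩ := hb
    exact exists_rapidDecay_of_le_log hvan (hω.exists_le_log hvan hs)

theorem bounded_in_Osm_bounded_in_Omn {N : ℕ} (ω : ℝ → ℝ) (hω : IsWeightFun ω)
    (hvan : ∀ t ∈ Set.Icc (0:ℝ) 1, ω t = 0)
    (m : ℕ) (hm : 0 < m) (B : Set (Euc N → ℝ))
    (hBmem : ∀ f ∈ B, ContDiff ℝ (⊤ : ℕ∞) f ∧ ∀ g : Euc N → ℝ, MemS ω g → qgBdd ω m g f)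
    (hBbdd : ∀ g : Euc N → ℝ, MemS ω g → ∃ C : ℝ, ∀ f ∈ B, ∀ (α : Fin N → ℕ) (x : Euc N),
      |g x| * |pdm α f x| * Real.exp (-(m : ℝ) * phiStar ω ((msize α : ℝ) / m)) ≤ C) :
    ∃ n₀ : ℕ, ∃ C : ℝ, ∀ f ∈ B, ∀ (α : Fin N → ℕ) (x : Euc N),
      |pdm α f x| * Real.exp (-(n₀ : ℝ) * ω ‖x‖ - (m : ℝ) * phiStar ω ((msize α : ℝ) / m)) ≤ C := by
  obtain ⟨χ, hχ, hpos, h0, hd⟩ := exists_rapidDecay_pos (N := N) hω hvan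
  by_contra! hcon
  choose f hfB α x hlt using fun j : ℕ => hcon j (4 ^ j)
  obtain ⟨hs, hg⟩ := memS_tsum_translate hω hχ hd x
  obtain ⟨C, hC⟩ := hBbdd _ hg
  have hle : ∀ j : ℕ, χ 0 * 2 ^ j ≤ C := by
    intro j
    refine le_trans ?_ (hC (f j) (hfB j) (α j) (x j))
    have hw : ∀ i, 0 ≤ translateWeight ω x i * χ (x j - x i) := fun i =>
      mul_nonneg (translateWeight_pos ω x i).le (hpos _)
    have h1 : translateWeight ω x j * χ 0 ≤ ∑' i, translateWeight ω x i * χ (x j - x i) := by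
      simpa using (hs (x j)).le_tsum j fun i _ => hw i
    rw [abs_of_nonneg (tsum_nonneg hw), mul_assoc]
    have h2 : (4 : ℝ) ^ j * Real.exp (j * ω ‖x j‖) ≤ |pdm (α j) (f j) (x j)| *
        Real.exp (-(m : ℝ) * phiStar ω ((msize (α j) : ℝ) / m)) := by
      have h3 := mul_le_mul_of_nonneg_right (hlt j).le (Real.exp_pos (j * ω ‖x j‖)).le
      rwa [mul_assoc _ (Real.exp _) (Real.exp _), ← Real.exp_add,
        show -(j : ℝ) * ω ‖x j‖ - (m : ℝ) * phiStar ω ((msize (α j) : ℝ) / m) + j * ω ‖x j‖ =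
          -(m : ℝ) * phiStar ω ((msize (α j) : ℝ) / m) by ring] at h3
    refine le_trans (le_of_eq ?_) (mul_le_mul h1 h2 (by positivity) (tsum_nonneg hw))
    rw [translateWeight, show (4 : ℝ) = 2 * 2 by norm_num, mul_pow, Real.exp_neg, one_div_pow]
    have := Real.exp_pos (j * ω ‖x j‖)
    field_simp
  obtain ⟨j, hj⟩ := pow_unbounded_of_one_lt (C / χ 0) one_lt_two
  have := hle j
  rw [div_lt_iff₀ h0] at hj
  linarith
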